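/- Let m ≥ 1 and let X be a standard Gaussian vector in ℝ^m. (a) For every real q with 1 ≤ q < ∞: √(2/π) · m^{1/q} ≤ 𝔼‖X‖_q ≤ K · √q · m^{1/q}, where ‖x‖_q = (Σ_{i=1}^m |x_i|^q)^{1/q} and K = √(2π/(e(2π − e))). (b) For the maximum norm ‖x‖_∞ = max_i |x_i|: c · √(1 + log m) ≤ 𝔼‖X‖_∞ ≤ C · √(1 + log m), where c = Φ^{−1}(1 − 1/(2e)) · (1 − e^{−1/e}), C = K · e, and Φ is the cumulative distribution function of the standard normal distribution. -/

import Mathlib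

open MeasureTheory ProbabilityTheory

/-- The distribution of a standard Gaussian vector in `ℝ^m`. -/
noncomputable def stdGaussian (m : ℕ) : Measure (Fin m → ℝ) :=
  Measure.pi fun _ => gaussianReal 0 1

/-- The cumulative distribution function of the standard normal distribution. -/
noncomputable def stdNormalCDF (a : ℝ) : ℝ :=
  (gaussianReal 0 1 (Set.Iic a)).toReal

noncomputable def auxF (q : ℝ) : ℝ :=
  q / 2 * Real.log 2 + Real.log (Real.Gamma ((q + 1) / 2)) - Real.log Real.pi / 2

lemma auxF_one : auxF 1 = Real.log 2 / 2 - Real.log Real.pi / 2 := by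
  unfold auxF; norm_num; ring

lemma auxF_two : auxF 2 = 0 := by
  unfold auxF
  have : Real.Gamma ((2 + 1) / 2) = Real.sqrt Real.pi / 2 := by
    rw [show ((2:ℝ) + 1) / 2 = 1/2 + 1 by norm_num, Real.Gamma_add_one (by norm_num),
      Real.Gamma_one_half_eq]; ring
  rw [this, Real.log_div (by positivity) (by norm_num), Real.log_sqrt Real.pi_pos.le]; ring

lemma auxF_add_two (q : ℝ) (hq : 1 ≤ q) : auxF (q + 2) = auxF q + Real.log (q + 1) := by
  unfold auxF
  rw [show (q + 2 + 1) / 2 = (q + 1) / 2 + 1 by ring, Real.Gamma_add_one (by positivity),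
    Real.log_mul (by positivity) (Real.Gamma_pos_of_pos (by positivity)).ne',
    Real.log_div (by positivity) (by norm_num)]
  ring

lemma auxF_three : auxF 3 = 3 / 2 * Real.log 2 - Real.log Real.pi / 2 := by
  have := auxF_add_two 1 le_rfl
  rw [auxF_one] at this
  norm_num at this
  rw [this]; ring

lemma auxF_convex {x y a b : ℝ} (hx : 1 ≤ x) (hy : 1 ≤ y) (ha : 0 ≤ a) (hb : 0 ≤ b)
    (hab : a + b = 1) : auxF (a * x + b * y) ≤ a * auxF x + b * auxF y := by
  have := Real.convexOn_log_Gamma.2 (x := (x+1)/2) (y := (y+1)/2)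
    (show (0:ℝ) < _ by positivity) (show (0:ℝ) < _ by positivity) ha hb hab
  simp only [smul_eq_mul, Function.comp] at this
  unfold auxF
  have hb' : b = 1 - a := by linarith
  rw [show (a * x + b * y + 1) / 2 = a * ((x + 1) / 2) + b * ((y + 1) / 2) by
    rw [hb']; ring]
  subst hb'
  linarith

lemma auxF_base (q : ℝ) (h1 : 1 ≤ q) (h3 : q ≤ 3) :
    auxF q ≤ q / 2 * Real.log (2 * q / Real.pi) := by
  have hpi := Real.pi_pos
  have hpi3 := Real.pi_gt_d2
  have hpi4 := Real.pi_lt_d2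
  have he := Real.exp_one_gt_d9
  rcases le_total q 2 with h2 | h2
  · have hc := auxF_convex (x := 1) (y := 2) (a := 2 - q) (b := q - 1) le_rfl (by norm_num)
      (by linarith) (by linarith) (by ring)
    rw [show (2 - q) * 1 + (q - 1) * 2 = q by ring, auxF_one, auxF_two] at hc
    have hl : Real.log Real.pi - Real.log 2 ≤ 1 / 2 := by
      rw [← Real.log_div hpi.ne' (by norm_num), Real.log_le_iff_le_exp (by positivity)]
      have h : Real.exp (1/2) * Real.exp (1/2) = Real.exp 1 := by
        rw [← Real.exp_add]; norm_num
      have := Real.exp_pos (1/2)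
      nlinarith
    have hq : 1 - q⁻¹ ≤ Real.log q := Real.one_sub_inv_le_log_of_pos (by linarith)
    have hq' : q - 1 ≤ q * Real.log q := by
      have := mul_le_mul_of_nonneg_left hq (show 0 ≤ q by linarith)
      rwa [mul_sub, mul_inv_cancel₀ (by positivity), mul_one] at this
    rw [Real.log_div (by positivity) hpi.ne', Real.log_mul (by norm_num) (by positivity)]
    nlinarith
  · have hc := auxF_convex (x := 2) (y := 3) (a := 3 - q) (b := q - 2) (by norm_num) (by norm_num)
      (by linarith) (by linarith) (by ring)
    rw [show (3 - q) * 2 + (q - 2) * 3 = q by ring, auxF_three, auxF_two] at hc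
    have hl : 3 * Real.log 2 - Real.log Real.pi ≤ 1 := by
      have : 3 * Real.log 2 = Real.log 8 := by
        rw [show (8:ℝ) = 2 ^ 3 by norm_num, Real.log_pow]; norm_num
      rw [this, ← Real.log_div (by norm_num) hpi.ne', Real.log_le_iff_le_exp (by positivity),
        div_le_iff₀ hpi]
      nlinarith
    have hq : 1 - (2 * q / Real.pi)⁻¹ ≤ Real.log (2 * q / Real.pi) :=
      Real.one_sub_inv_le_log_of_pos (by positivity)
    have hq' : q - Real.pi / 2 ≤ q * Real.log (2 * q / Real.pi) := by
      have := mul_le_mul_of_nonneg_left hq (show 0 ≤ q by linarith)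
      have e : q * (1 - (2 * q / Real.pi)⁻¹) = q - Real.pi / 2 := by
        field_simp
      rwa [e] at this
    nlinarith

lemma auxF_step (q : ℝ) (h1 : 1 ≤ q) (h : auxF q ≤ q / 2 * Real.log (2 * q / Real.pi)) :
    auxF (q + 2) ≤ (q + 2) / 2 * Real.log (2 * (q + 2) / Real.pi) := by
  have hpi := Real.pi_pos
  have hpi4 := Real.pi_lt_d2
  rw [auxF_add_two q h1]
  have hq : 0 < q := by linarith
  have hb := one_add_mul_self_le_rpow_one_add (s := 2 / q) (by
    have : 0 < 2 / q := by positivity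
    linarith) h1
  rw [mul_div_cancel₀ _ hq.ne'] at hb
  have hb2 : Real.log 3 ≤ q * (Real.log (q + 2) - Real.log q) := by
    rw [← Real.log_div (by positivity) hq.ne', ← Real.log_rpow (by positivity)]
    apply Real.log_le_log (by norm_num)
    rw [show (q + 2) / q = 1 + 2 / q by field_simp]
    linarith
  have hb3 : Real.log Real.pi ≤ Real.log 2 + Real.log 3 / 2 := by
    have : 2 * Real.log Real.pi ≤ 2 * Real.log 2 + Real.log 3 := by
      have e1 : 2 * Real.log Real.pi = Real.log (Real.pi ^ 2) := by rw [Real.log_pow]; norm_num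
      have e2 : 2 * Real.log 2 + Real.log 3 = Real.log (2 ^ 2 * 3) := by
        rw [Real.log_mul (by norm_num) (by norm_num), Real.log_pow]; norm_num
      rw [e1, e2]
      apply Real.log_le_log (by positivity)
      nlinarith
    linarith
  have hb4 : Real.log (q + 1) ≤ Real.log (q + 2) := Real.log_le_log (by positivity) (by linarith)
  rw [Real.log_div (by positivity) hpi.ne', Real.log_mul (by norm_num) (by positivity)] at h ⊢
  nlinarith

lemma auxF_le (q : ℝ) (h1 : 1 ≤ q) : auxF q ≤ q / 2 * Real.log (2 * q / Real.pi) := by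
  have key : ∀ n : ℕ, ∀ q : ℝ, 1 ≤ q → q ≤ 2 * n + 3 →
      auxF q ≤ q / 2 * Real.log (2 * q / Real.pi) := by
    intro n
    induction n with
    | zero => intro q h1 h3; exact auxF_base q h1 (by simpa using h3)
    | succ n ih =>
      intro q h1 h3
      push_cast at h3
      rcases le_total q 3 with h | h
      · exact auxF_base q h1 h
      · have := auxF_step (q - 2) (by linarith) (ih (q - 2) (by linarith) (by linarith))
        simpa using this
  obtain ⟨n, hn⟩ := exists_nat_gt q
  exact key n q h1 (by linarith [(Nat.cast_nonneg n : (0:ℝ) ≤ n)])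

lemma gauss_moment (q : ℝ) (hq : 0 ≤ q) :
    ∫ x, |x| ^ q ∂(gaussianReal 0 1) = Real.exp (auxF q) := by
  rw [integral_gaussianReal_eq_integral_smul one_ne_zero]
  have h := integral_comp_abs (f := fun x => gaussianPDFReal 0 1 x * x ^ q)
  have e : ∀ x : ℝ, gaussianPDFReal 0 1 |x| = gaussianPDFReal 0 1 x := by
    intro x; simp [gaussianPDFReal]
  simp only [e] at h
  simp only [smul_eq_mul]
  rw [h]
  have h2 : ∀ x : ℝ, gaussianPDFReal 0 1 x * x ^ q =
      (Real.sqrt (2 * Real.pi))⁻¹ * (x ^ q * Real.exp (-(1/2) * x ^ (2:ℝ))) := by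
    intro x
    simp only [gaussianPDFReal]
    norm_num
    rw [show -x ^ 2 / 2 = -(1 / 2 * x ^ 2) by ring]; ring
  simp only [h2]
  rw [integral_const_mul, integral_rpow_mul_exp_neg_mul_rpow (by norm_num) (by linarith) (by norm_num)]
  unfold auxF
  have hG := Real.Gamma_pos_of_pos (show 0 < (q + 1) / 2 by positivity)
  have hpi := Real.pi_pos
  rw [Real.exp_sub, Real.exp_add, Real.exp_log hG, mul_comm (q/2), ← Real.rpow_def_of_pos (by norm_num)]
  have e3 : Real.exp (Real.log Real.pi / 2) = Real.sqrt Real.pi := by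
    rw [Real.sqrt_eq_rpow, Real.rpow_def_of_pos hpi]; congr 1; ring
  have e4 : (1 / 2 : ℝ) ^ (-(q + 1) / 2) = 2 ^ (q / 2) * Real.sqrt 2 := by
    rw [one_div, Real.inv_rpow (by norm_num), ← Real.rpow_neg (by norm_num), Real.sqrt_eq_rpow,
      ← Real.rpow_add (by norm_num)]
    congr 1; ring
  rw [e3, e4, Real.sqrt_mul (by norm_num)]
  field_simp

lemma gauss_moment_le (q : ℝ) (hq : 1 ≤ q) :
    ∫ x, |x| ^ q ∂(gaussianReal 0 1) ≤ (2 * q / Real.pi) ^ (q / 2) := by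
  have hpi := Real.pi_pos
  rw [gauss_moment q (by linarith), Real.rpow_def_of_pos (by positivity), Real.exp_le_exp]
  linarith [auxF_le q hq]

lemma gauss_abs : ∫ x, |x| ∂(gaussianReal 0 1) = Real.sqrt (2 / Real.pi) := by
  have h := gauss_moment 1 zero_le_one
  simp only [Real.rpow_one] at h
  have hpi := Real.pi_pos
  rw [h, auxF_one, Real.sqrt_eq_rpow, Real.rpow_def_of_pos (by positivity),
    Real.log_div (by norm_num) hpi.ne']
  congr 1; ring

lemma gauss_integrable (q : ℝ) (hq : 0 ≤ q) :
    Integrable (fun x : ℝ => |x| ^ q) (gaussianReal 0 1) := by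
  by_contra hh
  have := gauss_moment q hq
  rw [integral_undef hh] at this
  exact (Real.exp_pos _).ne this

noncomputable def auxK (v : ℝ) : ℝ :=
  Real.exp (Real.log ((Real.sqrt (2 * Real.pi))⁻¹) - Real.log v / 2 - v / 2)

lemma auxK_log_convex {A B a b : ℝ} (hA : 0 < A) (hB : 0 < B) (ha : 0 ≤ a) (hb : 0 ≤ b)
    (hab : a + b = 1) : auxK (a * A + b * B) ≤ auxK A ^ a * auxK B ^ b := by
  have h := strictConcaveOn_log_Ioi.concaveOn.2 (x := A) (y := B) hA hB ha hb hab
  simp only [smul_eq_mul] at h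
  unfold auxK
  rw [← Real.exp_mul, ← Real.exp_mul, ← Real.exp_add, Real.exp_le_exp]
  have hb' : b = 1 - a := by linarith
  subst hb'
  linarith

lemma gauss_abs_tail (t : ℝ) (ht : 0 ≤ t) :
    gaussianReal 0 1 {x | t < |x|} = 2 * gaussianReal 0 1 (Set.Ioi t) := by
  have e : {x : ℝ | t < |x|} = Set.Ioi t ∪ (fun x => -x) ⁻¹' (Set.Ioi t) := by
    ext x; simp only [lt_abs, Set.mem_setOf_eq, Set.mem_union, Set.mem_Ioi, Set.mem_preimage]
  have hd : Disjoint (Set.Ioi t) ((fun x : ℝ => -x) ⁻¹' (Set.Ioi t)) := by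
    rw [Set.disjoint_left]
    intro x hx hx'
    simp at hx hx'
    linarith
  rw [e, measure_union hd (measurable_neg measurableSet_Ioi),
    ← Measure.map_apply measurable_neg measurableSet_Ioi]
  have := gaussianReal_map_neg (μ := 0) (v := 1)
  rw [neg_zero] at this
  change _ + (Measure.map (fun x => -x) (gaussianReal 0 1)) _ = _
  rw [this, two_mul]

lemma gauss_tail_eq (u : ℝ) (hu : 0 ≤ u) :
    gaussianReal 0 1 {x | Real.sqrt u < |x|} =
      ∫⁻ w in Set.Ioi (0:ℝ), ENNReal.ofReal (auxK (u + w)) := by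
  rw [gauss_abs_tail _ (Real.sqrt_nonneg _), gaussianReal_apply _ one_ne_zero]
  have him : (fun w => Real.sqrt (u + w)) '' Set.Ioi 0 = Set.Ioi (Real.sqrt u) := by
    ext y
    constructor
    · rintro ⟨w, hw, rfl⟩
      exact Real.sqrt_lt_sqrt hu (by simpa using hw)
    · intro hy
      have hy' : Real.sqrt u < y := hy
      have hy0 : 0 ≤ y := (Real.sqrt_nonneg u).trans hy'.le
      refine ⟨y ^ 2 - u, ?_, ?_⟩
      · have := (Real.sqrt_lt' (lt_of_le_of_lt (Real.sqrt_nonneg u) hy')).1 hy'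
        simpa using this
      · simp [Real.sqrt_sq hy0]
  rw [← him, lintegral_image_eq_lintegral_deriv_mul_of_monotoneOn measurableSet_Ioi
    (f' := fun w => 1 / (2 * Real.sqrt (u + w)))]
  · rw [← lintegral_const_mul' _ _ (by norm_num)]
    refine setLIntegral_congr_fun measurableSet_Ioi ?_
    intro w hw
    have hw' : 0 < w := hw
    have hv : 0 < u + w := by linarith
    simp only
    rw [gaussianPDF, ← ENNReal.ofReal_mul (by positivity),
      show (2 : ENNReal) = ENNReal.ofReal 2 by simp, ← ENNReal.ofReal_mul (by positivity)]
    congr 1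
    unfold auxK
    have hpi := Real.pi_pos
    have e3 : Real.exp (Real.log (u + w) / 2) = Real.sqrt (u + w) := by
      rw [Real.sqrt_eq_rpow, Real.rpow_def_of_pos hv]; congr 1; ring
    rw [Real.exp_sub, Real.exp_sub, Real.exp_log (by positivity), e3]
    simp only [gaussianPDFReal]
    have : ((1 : NNReal) : ℝ) = 1 := rfl
    rw [sub_zero, Real.sq_sqrt hv.le, this, neg_div, mul_one, mul_one, Real.exp_neg]
    field_simp
  · intro w hw
    have hw' : 0 < w := hw
    have := ((hasDerivAt_id w).const_add u).sqrt (by simp; linarith)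
    simpa using this.hasDerivWithinAt
  · intro x hx y hy hxy
    exact Real.sqrt_le_sqrt (by linarith)

lemma gauss_tail_pow (t s : ℝ) (ht : 0 ≤ t) (hs : 1 ≤ s) :
    (gaussianReal 0 1 {x | t < |x|}) ^ s ≤ gaussianReal 0 1 {x | t * Real.sqrt s < |x|} := by
  have hs0 : 0 < s := by linarith
  have e1 : t = Real.sqrt (t ^ 2) := (Real.sqrt_sq ht).symm
  have e2 : t * Real.sqrt s = Real.sqrt (s * t ^ 2) := by
    rw [Real.sqrt_mul hs0.le, ← e1, mul_comm]
  have hle : s⁻¹ ≤ 1 := inv_le_one_of_one_le₀ hs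
  have h0 := gauss_tail_eq 0 le_rfl
  have hT0 : ∫⁻ w in Set.Ioi (0:ℝ), ENNReal.ofReal (auxK (0 + w)) ≤ 1 := by
    rw [← h0]; exact prob_le_one
  have key : gaussianReal 0 1 {x | t < |x|} ≤
      (gaussianReal 0 1 {x | t * Real.sqrt s < |x|}) ^ s⁻¹ := by
    rw [e2]
    conv_lhs => rw [e1]
    rw [gauss_tail_eq _ (by positivity), gauss_tail_eq _ (by positivity)]
    have hm : ∀ u : ℝ, Measurable (fun w => ENNReal.ofReal (auxK (u + w))) := by
      intro u; unfold auxK; fun_prop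
    calc ∫⁻ w in Set.Ioi (0:ℝ), ENNReal.ofReal (auxK (t ^ 2 + w))
        ≤ ∫⁻ w in Set.Ioi (0:ℝ), ENNReal.ofReal (auxK (s * t ^ 2 + w)) ^ s⁻¹ *
            ENNReal.ofReal (auxK (0 + w)) ^ (1 - s⁻¹) := by
          refine setLIntegral_mono' measurableSet_Ioi ?_
          intro w hw
          have hw' : 0 < w := hw
          have hk : ∀ v, 0 < auxK v := fun v => Real.exp_pos _
          rw [ENNReal.ofReal_rpow_of_pos (hk _), ENNReal.ofReal_rpow_of_pos (hk _),
            ← ENNReal.ofReal_mul (Real.rpow_nonneg (hk _).le _)]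
          apply ENNReal.ofReal_le_ofReal
          have := auxK_log_convex (A := s * t ^ 2 + w) (B := 0 + w) (a := s⁻¹) (b := 1 - s⁻¹)
            (by positivity) (by linarith) (by positivity) (by linarith) (by ring)
          convert this using 2
          field_simp
          ring
      _ ≤ _ := ENNReal.lintegral_mul_norm_pow_le (hm _).aemeasurable (hm _).aemeasurable
          (by positivity) (by linarith) (by ring)
      _ ≤ (∫⁻ w in Set.Ioi (0:ℝ), ENNReal.ofReal (auxK (s * t ^ 2 + w))) ^ s⁻¹ * 1 := by
          gcongr
          exact ENNReal.rpow_le_one hT0 (by linarith)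
      _ = _ := mul_one _
  calc _ ≤ ((gaussianReal 0 1 {x | t * Real.sqrt s < |x|}) ^ s⁻¹) ^ s :=
        ENNReal.rpow_le_rpow key hs0.le
    _ = _ := by rw [← ENNReal.rpow_mul, inv_mul_cancel₀ hs0.ne', ENNReal.rpow_one]

lemma auxY_integrable (m : ℕ) (q : ℝ) (hq : 1 ≤ q) :
    Integrable (fun x : Fin m → ℝ => ∑ i, |x i| ^ q)
      (Measure.pi fun _ => gaussianReal 0 1) := by
  refine integrable_finset_sum _ fun i _ => ?_
  exact integrable_comp_eval (μ := fun _ : Fin m => gaussianReal 0 1) (i := i)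
    (gauss_integrable q (by linarith))

lemma auxY_integral (m : ℕ) (q : ℝ) (hq : 1 ≤ q) :
    ∫ x : Fin m → ℝ, ∑ i, |x i| ^ q ∂(Measure.pi fun _ => gaussianReal 0 1) =
      m * ∫ x, |x| ^ q ∂(gaussianReal 0 1) := by
  rw [integral_finset_sum]
  · have : ∀ i : Fin m, ∫ x : Fin m → ℝ, |x i| ^ q ∂(Measure.pi fun _ => gaussianReal 0 1) =
        ∫ x, |x| ^ q ∂(gaussianReal 0 1) := fun i =>
      integral_comp_eval (μ := fun _ : Fin m => gaussianReal 0 1) (i := i)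
        (f := fun x => |x| ^ q) (gauss_integrable q (by linarith)).aestronglyMeasurable
    simp [this]
  · intro i _
    exact integrable_comp_eval (μ := fun _ : Fin m => gaussianReal 0 1) (i := i)
      (gauss_integrable q (by linarith))

lemma auxY_nonneg (m : ℕ) (q : ℝ) (x : Fin m → ℝ) : 0 ≤ ∑ i, |x i| ^ q :=
  Finset.sum_nonneg fun i _ => Real.rpow_nonneg (abs_nonneg _) _

lemma auxN_integrable (m : ℕ) (q : ℝ) (hq : 1 ≤ q) :
    Integrable (fun x : Fin m → ℝ => (∑ i, |x i| ^ q) ^ (1 / q))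
      (Measure.pi fun _ => gaussianReal 0 1) := by
  have hY := auxY_integrable m q hq
  have h1q : 1 / q ≤ 1 := by rw [div_le_one (by linarith)]; exact hq
  have h0q : 0 ≤ 1 / q := by positivity
  refine Integrable.mono' ((integrable_const (1:ℝ)).add hY) ?_ ?_
  · exact (hY.aestronglyMeasurable.aemeasurable.pow_const _).aestronglyMeasurable
  · refine Filter.Eventually.of_forall fun x => ?_
    have hy := auxY_nonneg m q x
    rw [Real.norm_of_nonneg (Real.rpow_nonneg hy _)]
    simp only [Pi.add_apply]
    rcases le_total (∑ i, |x i| ^ q) 1 with h | h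
    · linarith [Real.rpow_le_one hy h h0q]
    · have := Real.rpow_le_rpow_of_exponent_le h h1q
      rw [Real.rpow_one] at this
      linarith

lemma auxK_bound : Real.sqrt (2 / Real.pi) ≤
    Real.sqrt (2 * Real.pi / (Real.exp 1 * (2 * Real.pi - Real.exp 1))) := by
  apply Real.sqrt_le_sqrt
  have hpi := Real.pi_gt_d2
  have he := Real.exp_one_lt_d9
  have he0 := Real.exp_pos 1
  have : 0 < 2 * Real.pi - Real.exp 1 := by linarith
  rw [div_le_div_iff₀ (by positivity) (by positivity)]
  nlinarith [sq_nonneg (Real.pi - Real.exp 1)]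

lemma auxN_upper (m : ℕ) (q : ℝ) (hq : 1 ≤ q) :
    ∫ x : Fin m → ℝ, (∑ i, |x i| ^ q) ^ (1 / q) ∂(Measure.pi fun _ => gaussianReal 0 1) ≤
      Real.sqrt (2 * Real.pi / (Real.exp 1 * (2 * Real.pi - Real.exp 1))) *
          Real.sqrt q * (m : ℝ) ^ (1 / q) := by
  have hpi := Real.pi_pos
  have h1q : 1 / q ≤ 1 := by rw [div_le_one (by linarith)]; exact hq
  have h0q : 0 ≤ 1 / q := by positivity
  have hM0 : 0 ≤ ∫ x, |x| ^ q ∂(gaussianReal 0 1) :=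
    integral_nonneg fun x => Real.rpow_nonneg (abs_nonneg _) _
  have hJ := (Real.concaveOn_rpow h0q h1q).le_map_integral
    (μ := Measure.pi fun _ : Fin m => gaussianReal 0 1)
    (f := fun x : Fin m → ℝ => ∑ i, |x i| ^ q)
    (continuousOn_id.rpow_const fun _ _ => Or.inr h0q) isClosed_Ici
    (Filter.Eventually.of_forall fun x => auxY_nonneg m q x)
    (auxY_integrable m q hq) (auxN_integrable m q hq)
  refine hJ.trans ?_
  rw [auxY_integral m q hq, Real.mul_rpow (Nat.cast_nonneg m) hM0, mul_comm]
  refine mul_le_mul_of_nonneg_right ?_ (Real.rpow_nonneg (Nat.cast_nonneg m) _)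
  calc (∫ x, |x| ^ q ∂(gaussianReal 0 1)) ^ (1 / q)
      ≤ ((2 * q / Real.pi) ^ (q / 2)) ^ (1 / q) :=
        Real.rpow_le_rpow hM0 (gauss_moment_le q hq) h0q
    _ = Real.sqrt (2 / Real.pi) * Real.sqrt q := by
        rw [← Real.rpow_mul (by positivity), ← Real.sqrt_mul (by positivity), Real.sqrt_eq_rpow]
        congr 1 <;> field_simp
    _ ≤ _ := mul_le_mul_of_nonneg_right auxK_bound (Real.sqrt_nonneg _)

lemma auxN_lower (m : ℕ) (hm : 1 ≤ m) (q : ℝ) (hq : 1 ≤ q) :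
    Real.sqrt (2 / Real.pi) * (m : ℝ) ^ (1 / q) ≤
    ∫ x : Fin m → ℝ, (∑ i, |x i| ^ q) ^ (1 / q) ∂(Measure.pi fun _ => gaussianReal 0 1) := by
  have hm0 : (0:ℝ) < m := by exact_mod_cast hm
  have hm1 : (0:ℝ) < (m:ℝ) ^ (1 / q) := Real.rpow_pos_of_pos hm0 _
  have hY1 := auxY_integral m 1 le_rfl
  have hI1 := auxY_integrable m 1 le_rfl
  simp only [Real.rpow_one] at hY1 hI1
  rw [gauss_abs] at hY1
  have hpt : ∀ x : Fin m → ℝ, (m:ℝ) ^ (1 / q) * (m:ℝ)⁻¹ * ∑ i, |x i| ≤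
      (∑ i, |x i| ^ q) ^ (1 / q) := by
    intro x
    have h := Real.arith_mean_le_rpow_mean (Finset.univ : Finset (Fin m)) (fun _ => (m:ℝ)⁻¹)
      (fun i => |x i|) (fun _ _ => by positivity) (by simp [hm0.ne'])
      (fun _ _ => abs_nonneg _) hq
    rw [← Finset.mul_sum, ← Finset.mul_sum, Real.mul_rpow (by positivity) (auxY_nonneg m q x),
      Real.inv_rpow hm0.le] at h
    have h2 := mul_le_mul_of_nonneg_left h hm1.le
    rw [mul_inv_cancel_left₀ hm1.ne'] at h2
    rwa [mul_assoc]
  calc Real.sqrt (2 / Real.pi) * (m : ℝ) ^ (1 / q)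
      = ∫ x : Fin m → ℝ, (m:ℝ) ^ (1 / q) * (m:ℝ)⁻¹ * ∑ i, |x i|
          ∂(Measure.pi fun _ => gaussianReal 0 1) := by
        rw [integral_const_mul, hY1]; field_simp
    _ ≤ _ := integral_mono (hI1.const_mul _) (auxN_integrable m q hq) hpt

lemma auxS_le (m : ℕ) (hm : 1 ≤ m) (q : ℝ) (hq : 1 ≤ q) (x : Fin m → ℝ) :
    ⨆ i, |x i| ≤ (∑ i, |x i| ^ q) ^ (1 / q) := by
  haveI : Nonempty (Fin m) := ⟨⟨0, hm⟩⟩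
  refine ciSup_le fun i => ?_
  have hq0 : 0 < q := by linarith
  calc |x i| = (|x i| ^ q) ^ (1 / q) := by
        rw [← Real.rpow_mul (abs_nonneg _), mul_one_div_cancel hq0.ne', Real.rpow_one]
    _ ≤ _ := by
        refine Real.rpow_le_rpow (Real.rpow_nonneg (abs_nonneg _) _) ?_ (by positivity)
        exact Finset.single_le_sum (f := fun i => |x i| ^ q)
          (fun j _ => Real.rpow_nonneg (abs_nonneg _) _) (Finset.mem_univ i)

lemma auxS_nonneg (m : ℕ) (x : Fin m → ℝ) : 0 ≤ ⨆ i, |x i| :=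
  Real.iSup_nonneg fun _ => abs_nonneg _

lemma auxS_integrable (m : ℕ) (hm : 1 ≤ m) :
    Integrable (fun x : Fin m → ℝ => ⨆ i, |x i|) (Measure.pi fun _ => gaussianReal 0 1) := by
  refine Integrable.mono' (auxN_integrable m 1 le_rfl) ?_ ?_
  · exact (Measurable.iSup fun i => (measurable_pi_apply i).abs).aestronglyMeasurable
  · refine Filter.Eventually.of_forall fun x => ?_
    rw [Real.norm_of_nonneg (auxS_nonneg m x)]
    exact auxS_le m hm 1 le_rfl x

lemma auxS_upper (m : ℕ) (hm : 1 ≤ m) :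
    ∫ x : Fin m → ℝ, (⨆ i, |x i|) ∂(Measure.pi fun _ => gaussianReal 0 1) ≤
      Real.sqrt (2 * Real.pi / (Real.exp 1 * (2 * Real.pi - Real.exp 1))) *
        Real.exp 1 * Real.sqrt (1 + Real.log m) := by
  have hm1 : (1:ℝ) ≤ m := by exact_mod_cast hm
  have hL := Real.log_nonneg hm1
  have hq : 1 ≤ 1 + Real.log m := by linarith
  refine (integral_mono (auxS_integrable m hm) (auxN_integrable m _ hq)
    (auxS_le m hm _ hq)).trans ((auxN_upper m _ hq).trans ?_)
  rw [mul_assoc, mul_assoc]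
  refine mul_le_mul_of_nonneg_left ?_ (Real.sqrt_nonneg _)
  rw [mul_comm]
  refine mul_le_mul_of_nonneg_right ?_ (Real.sqrt_nonneg _)
  rw [Real.rpow_def_of_pos (by linarith), Real.exp_le_exp, mul_one_div, div_le_one (by linarith)]
  linarith

lemma auxS_lower (m : ℕ) (hm : 1 ≤ m) (a : ℝ)
    (ha : (gaussianReal 0 1 (Set.Iic a)).toReal = 1 - 1 / (2 * Real.exp 1)) :
    a * (1 - Real.exp (-1 / Real.exp 1)) * Real.sqrt (1 + Real.log m) ≤
      ∫ x : Fin m → ℝ, (⨆ i, |x i|) ∂(Measure.pi fun _ => gaussianReal 0 1) := by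
  have hm1 : (1:ℝ) ≤ m := by exact_mod_cast hm
  have hm0 : (0:ℝ) < m := by linarith
  have hL := Real.log_nonneg hm1
  have hexp : 0 ≤ 1 - Real.exp (-1 / Real.exp 1) := by
    have : Real.exp (-1 / Real.exp 1) ≤ 1 := by
      rw [Real.exp_le_one_iff]
      exact div_nonpos_of_nonpos_of_nonneg (by norm_num) (Real.exp_pos 1).le
    linarith
  rcases lt_or_ge a 0 with ha0 | ha0
  · refine le_trans ?_ (integral_nonneg (auxS_nonneg m))
    exact mul_nonpos_of_nonpos_of_nonneg (mul_nonpos_of_nonpos_of_nonneg ha0.le hexp)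
      (Real.sqrt_nonneg _)
  set s := 1 + Real.log m with hs
  set t := a * Real.sqrt s with ht
  have hIoi : (gaussianReal 0 1).real (Set.Ioi a) = 1 / (2 * Real.exp 1) := by
    rw [← Set.compl_Iic, probReal_compl_eq_one_sub measurableSet_Iic, measureReal_def, ha]; ring
  have hTa : (gaussianReal 0 1).real {x | a < |x|} = (Real.exp 1)⁻¹ := by
    rw [measureReal_def, gauss_abs_tail a ha0, ENNReal.toReal_mul, ← measureReal_def, hIoi]
    simp only [ENNReal.toReal_ofNat]
    field_simp
  have hTt : (Real.exp 1)⁻¹ * (m:ℝ)⁻¹ ≤ (gaussianReal 0 1).real {x | t < |x|} := by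
    have h := ENNReal.toReal_mono (measure_ne_top _ _) (gauss_tail_pow a s ha0 (by linarith))
    rw [← ENNReal.toReal_rpow, ← measureReal_def, hTa] at h
    change _ ≤ (gaussianReal 0 1).real {x | t < |x|} at h
    refine le_of_eq_of_le ?_ h
    rw [← Real.exp_neg, ← Real.exp_mul, hs, mul_add, Real.exp_add, mul_one, neg_one_mul,
      Real.exp_neg (Real.log m), Real.exp_log hm0]
  set p := (gaussianReal 0 1).real {x | t < |x|} with hp
  have hms : MeasurableSet {x : ℝ | t < |x|} := measurableSet_lt measurable_const measurable_id.abs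
  have hpi : (Measure.pi fun _ : Fin m => gaussianReal 0 1).real
      (Set.univ.pi fun _ => {x : ℝ | t < |x|}ᶜ) = (1 - p) ^ m := by
    rw [measureReal_def, Measure.pi_pi, ENNReal.toReal_prod]
    simp only [← measureReal_def]
    rw [probReal_compl_eq_one_sub hms]
    simp [hp]
  have hp1 : p ≤ 1 := measureReal_le_one
  have hpow : (1 - p) ^ m ≤ Real.exp (-1 / Real.exp 1) := by
    calc (1 - p) ^ m ≤ (Real.exp (-p)) ^ m :=
          pow_le_pow_left₀ (by linarith) (Real.one_sub_le_exp_neg p) m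
      _ = Real.exp (m * -p) := (Real.exp_nat_mul _ _).symm
      _ ≤ _ := by
          rw [Real.exp_le_exp]
          have := mul_le_mul_of_nonneg_left hTt hm0.le
          have e : (m:ℝ) * ((Real.exp 1)⁻¹ * (m:ℝ)⁻¹) = (Real.exp 1)⁻¹ := by field_simp
          rw [e] at this
          rw [neg_div, one_div]
          linarith
  have hmeas : 1 - Real.exp (-1 / Real.exp 1) ≤
      (Measure.pi fun _ : Fin m => gaussianReal 0 1).real {x | t ≤ ⨆ i, |x i|} := by
    have hsub : (Set.univ.pi fun _ : Fin m => {x : ℝ | t < |x|}ᶜ)ᶜ ⊆ {x | t ≤ ⨆ i, |x i|} := by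
      intro x hx
      simp only [Set.mem_compl_iff, Set.mem_pi, Set.mem_univ, forall_const, Set.mem_setOf_eq,
        not_forall, not_not] at hx
      obtain ⟨i, hi⟩ := hx
      exact hi.le.trans (le_ciSup (f := fun i => |x i|) (Set.finite_range _).bddAbove i)
    refine le_trans ?_ (measureReal_mono hsub)
    rw [probReal_compl_eq_one_sub (MeasurableSet.univ_pi fun _ => hms.compl), hpi]
    linarith
  have hM := mul_meas_ge_le_integral_of_nonneg
    (μ := Measure.pi fun _ : Fin m => gaussianReal 0 1)
    (Filter.Eventually.of_forall (auxS_nonneg m)) (auxS_integrable m hm) t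
  refine le_trans ?_ hM
  have ht0 : 0 ≤ t := mul_nonneg ha0 (Real.sqrt_nonneg _)
  calc _ = t * (1 - Real.exp (-1 / Real.exp 1)) := by rw [ht]; ring
    _ ≤ _ := mul_le_mul_of_nonneg_left hmeas ht0

theorem stmt19 (m : ℕ) (hm : 1 ≤ m) :
    (∀ q : ℝ, 1 ≤ q →
      Real.sqrt (2 / Real.pi) * (m : ℝ) ^ (1 / q) ≤
        (∫ x, (∑ i, |x i| ^ q) ^ (1 / q) ∂stdGaussian m) ∧
      (∫ x, (∑ i, |x i| ^ q) ^ (1 / q) ∂stdGaussian m) ≤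
        Real.sqrt (2 * Real.pi / (Real.exp 1 * (2 * Real.pi - Real.exp 1))) *
          Real.sqrt q * (m : ℝ) ^ (1 / q)) ∧
    (∀ a : ℝ, stdNormalCDF a = 1 - 1 / (2 * Real.exp 1) →
      a * (1 - Real.exp (-1 / Real.exp 1)) * Real.sqrt (1 + Real.log m) ≤
        ∫ x, (⨆ i, |x i|) ∂stdGaussian m) ∧
    (∫ x, (⨆ i, |x i|) ∂stdGaussian m) ≤
      Real.sqrt (2 * Real.pi / (Real.exp 1 * (2 * Real.pi - Real.exp 1))) *
        Real.exp 1 * Real.sqrt (1 + Real.log m) := by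
  exact ⟨fun q hq => ⟨auxN_lower m hm q hq, auxN_upper m q hq⟩,
    fun a ha => auxS_lower m hm a ha, auxS_upper m hm⟩
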